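/- Let R be a standard graded algebra over a field K, let d > 0 be a degree, let l_1,…,l_r be linear forms of R satisfying property (Gr,d), and let dim_K R_d = C(k_d,d) + C(k_{d−1},d−1) + … + C(k_1,1) be the d-th Macaulay representation of dim_K R_d. Then for every p with 1 ≤ p ≤ r one has dim_K (R/(l_1,…,l_p))_d ≤ C(k_d−p,d) + C(k_{d−1}−p,d−1) + … + C(k_1−p,1). -/

import Mathlib

/-- Polynomial functions on a `K`-vector space `V`: the subalgebra of `V → K`
generated by the linear functionals. -/
def polyFuns (K V : Type*) [Field K] [AddCommGroup V] [Module K V] : Subalgebra K (V → K) :=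
  Algebra.adjoin K {f : V → K | ∃ φ : V →ₗ[K] K, ⇑φ = f}

/-- A subset of (the affine space of) a `K`-vector space is Zariski closed if it is the
common zero locus of a family of polynomial functions. -/
def IsZClosed (K : Type*) {V : Type*} [Field K] [AddCommGroup V] [Module K V]
    (Z : Set V) : Prop :=
  ∃ S : Set (V → K), (∀ f ∈ S, f ∈ polyFuns K V) ∧ Z = {v | ∀ f ∈ S, f v = 0}

/-- A subset is Zariski open if its complement is Zariski closed. -/
def IsZOpen (K : Type*) {V : Type*} [Field K] [AddCommGroup V] [Module K V]
    (U : Set V) : Prop :=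
  IsZClosed K Uᶜ

/-- An irreducible variety: a nonempty Zariski closed set which is not the union of two
proper closed subsets. -/
def IsIrredVariety (K : Type*) {V : Type*} [Field K] [AddCommGroup V] [Module K V]
    (W : Set V) : Prop :=
  IsZClosed K W ∧ W.Nonempty ∧
    ∀ Z₁ Z₂ : Set V, IsZClosed K Z₁ → IsZClosed K Z₂ → W ⊆ Z₁ ∪ Z₂ → (W ⊆ Z₁ ∨ W ⊆ Z₂)

/-- Auxiliary recursion for `wordIdeal`: letters are booleans, `true` standing for the
letter `c` (colon) and `false` for the letter `s` (sum). The natural number argument keeps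
track of which linear form is to be used next (0-indexed). -/
def wordIdealAux {R : Type*} [CommRing R] (l : ℕ → R) : ℕ → Ideal R → List Bool → Ideal R
  | _, I, [] => I
  | j, I, a :: o =>
      wordIdealAux l (j + 1)
        (if a then I.colon (Ideal.span {l j}) else I ⊔ Ideal.span {l j}) o

/-- The ideal `I_{l,o}` attached to a sequence of (linear) forms `l` and a word `o` in the
letters `{c, s}` (here `c = true`, `s = false`): starting from `(0)`, the `j`-th letter
either colons (`c`) or adds (`s`) the `j`-th form. -/
def wordIdeal {R : Type*} [CommRing R] (l : ℕ → R) (o : List Bool) : Ideal R :=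
  wordIdealAux l 0 ⊥ o

/-- The degree `d` component `I ∩ R_d` of an ideal `I`, as a `K`-subspace of `𝒜 d`. -/
def homComp {K R : Type*} [Field K] [CommRing R] [Algebra K R]
    (𝒜 : ℕ → Submodule K R) (I : Ideal R) (d : ℕ) : Submodule K (𝒜 d) :=
  Submodule.comap (𝒜 d).subtype (Submodule.restrictScalars K I)

/-- `dim_K (I)_d`, the dimension of the degree `d` component of the (homogeneous) ideal `I`. -/
noncomputable def homDim {K R : Type*} [Field K] [CommRing R] [Algebra K R]
    (𝒜 : ℕ → Submodule K R) (I : Ideal R) (d : ℕ) : ℕ :=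
  Module.finrank K (homComp 𝒜 I d)

/-- `dim_K (R/I)_d`, the dimension of the degree `d` component of `R/I` for a
(homogeneous) ideal `I`, computed as `dim 𝒜 d / (I ∩ 𝒜 d)`. -/
noncomputable def quotDim {K R : Type*} [Field K] [CommRing R] [Algebra K R]
    (𝒜 : ℕ → Submodule K R) (I : Ideal R) (d : ℕ) : ℕ :=
  Module.finrank K ((𝒜 d) ⧸ homComp 𝒜 I d)

/-- `macaulayDown c d = c_⟨d⟩`: if `c = C(k_d,d) + … + C(k_1,1)` is the `d`-th Macaulay
representation of `c`, then `c_⟨d⟩ = C(k_d - 1,d) + … + C(k_1 - 1,1)`; computed greedily. -/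
def macaulayDown : ℕ → ℕ → ℕ
  | _, 0 => 0
  | c, d + 1 =>
      let k := Nat.findGreatest (fun k => Nat.choose k (d + 1) ≤ c) (c + d + 1)
      Nat.choose (k - 1) (d + 1) + macaulayDown (c - Nat.choose k (d + 1)) d

/-- Property (Gr,d) for the linear forms `l 0, …, l (r-1)` (letters: `true = c`,
`false = s`): for every word `o` of length `i ≤ r`,
(1) if `m ⊄ I_o` and `i < r` then `l_{i+1} ∉ I_o`;
(2) if `i = r` and `|o|_c < d` then `m ⊆ I_o`;
(3) if `i ≤ r - 2` then `dim (I_{o,c,s})_{d - |o|_c - 1} ≤ dim (I_{o,s,c})_{d - |o|_c - 1}`. -/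
def GrProp {K R : Type*} [Field K] [CommRing R] [Algebra K R]
    (𝒜 : ℕ → Submodule K R) [GradedAlgebra 𝒜] (l : ℕ → R) (r d : ℕ) : Prop :=
  ∀ o : List Bool, o.length ≤ r →
    (¬ (HomogeneousIdeal.irrelevant 𝒜).toIdeal ≤ wordIdeal l o → o.length < r →
        l o.length ∉ wordIdeal l o) ∧
    (o.length = r → o.count true < d →
        (HomogeneousIdeal.irrelevant 𝒜).toIdeal ≤ wordIdeal l o) ∧
    (o.length + 2 ≤ r →
        homDim 𝒜 (wordIdeal l (o ++ [true, false])) (d - o.count true - 1) ≤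
          homDim 𝒜 (wordIdeal l (o ++ [false, true])) (d - o.count true - 1))


/-!
The heart of the matter is Green's bound `dim (R/I_{o,s})_e ≤ (dim (R/I_o)_e)_⟨e⟩`, for every word
`o` of length `< r` and `e = d - |o|_c > 0`, proved by descending induction on the length of `o`.
Put `a = dim (R/I_{o,s})_e` and `b = dim (R/I_{o,c})_{e-1}`. Multiplication by the next linear form
gives `dim (R/I_o)_e = a + b` and `a = dim (R/I_{o,s,s})_e + dim (R/I_{o,s,c})_{e-1}`. Condition (3)
replaces `I_{o,s,c}` by `I_{o,c,s}`, so the induction hypothesis for `o,s` and `o,c` yields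
`a ≤ a_⟨e⟩ + b_⟨e-1⟩`, which forces `a ≤ (a + b)_⟨e⟩` by the arithmetic of Macaulay representations.
The words `s,…,s` then give the theorem, since `c ↦ c_⟨d⟩` is monotone and lowers every `k_i` by
one.

Condition (2) for the word `s,…,s` of length `r` says that `l_1,…,l_r` generate the irrelevant
ideal, so all `R_n` are finite-dimensional as soon as `R_0` is.
-/

section MacaulayNumerics

open Set

/-- The shifted Macaulay sum `C(k_d - p, d) + … + C(k_1 - p, 1)`. When `k` is strictly increasing on
`[1, d]`, its value at `p = 0` is the number whose `d`-th Macaulay representation is given by `k`.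
The subtraction is truncated, which is harmless because `C(0, i) = 0` for `i ≥ 1`. -/
def macaulaySum (k : ℕ → ℕ) (p d : ℕ) : ℕ := ∑ i ∈ Finset.Icc 1 d, (k i - p).choose i

/-- The sequence `k - p`, made strictly increasing on `[1, d]` again by replacing each `k_i - p < i`
by `i - 1`. Both values contribute nothing to a Macaulay sum. -/
def macaulayShift (k : ℕ → ℕ) (p i : ℕ) : ℕ := max (k i - p) (i - 1)

/-- The sequence `k + 1`, except that a top `k_i < i`, which contributes nothing to a Macaulay sum,
is replaced by `i - 1`. It represents the least number `c` with `macaulaySum k 0 d ≤ c_⟨d⟩`. -/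
def macaulayRaise (k : ℕ → ℕ) (i : ℕ) : ℕ := if i ≤ k i then k i + 1 else i - 1

variable {k k' : ℕ → ℕ} {d : ℕ}

lemma macaulaySum_succ (k : ℕ → ℕ) (p d : ℕ) :
    macaulaySum k p (d + 1) = macaulaySum k p d + (k (d + 1) - p).choose (d + 1) :=
  Finset.sum_Icc_succ_top (by omega) _

lemma choose_le_macaulaySum_succ (k : ℕ → ℕ) (p d : ℕ) :
    (k (d + 1) - p).choose (d + 1) ≤ macaulaySum k p (d + 1) := by
  rw [macaulaySum_succ]
  exact Nat.le_add_left _ _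

lemma macaulaySum_succ' (k : ℕ → ℕ) (p d : ℕ) :
    macaulaySum k p (d + 1) =
      (k 1 - p) + ∑ i ∈ Finset.Icc 1 d, (k (i + 1) - p).choose (i + 1) := by
  induction d with
  | zero => simp [macaulaySum]
  | succ d ih => rw [macaulaySum_succ, ih, Finset.sum_Icc_succ_top (by omega), add_assoc]

lemma macaulaySum_congr {p p' : ℕ}
    (h : ∀ i ∈ Icc 1 d, (k i - p).choose i = (k' i - p').choose i) :
    macaulaySum k p d = macaulaySum k' p' d :=
  Finset.sum_congr rfl fun i hi => h i (by simpa using hi)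

lemma strictMonoOn_Icc_pred (hk : StrictMonoOn k (Icc 1 (d + 1))) : StrictMonoOn k (Icc 1 d) :=
  hk.mono (Icc_subset_Icc_right d.le_succ)

lemma macaulaySum_zero_lt_choose (hk : StrictMonoOn k (Icc 1 (d + 1))) :
    macaulaySum k 0 (d + 1) < (k (d + 1) + 1).choose (d + 1) := by
  induction d with
  | zero => simp [macaulaySum]
  | succ d ih =>
    have hlt : k (d + 1) < k (d + 2) := hk ⟨by omega, by omega⟩ ⟨by omega, le_rfl⟩ (by omega)
    calc macaulaySum k 0 (d + 2)
      _ = macaulaySum k 0 (d + 1) + (k (d + 2)).choose (d + 2) := macaulaySum_succ k 0 (d + 1)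
      _ < (k (d + 1) + 1).choose (d + 1) + (k (d + 2)).choose (d + 2) := by
        gcongr; exact ih (strictMonoOn_Icc_pred hk)
      _ ≤ (k (d + 2)).choose (d + 1) + (k (d + 2)).choose (d + 2) := by
        gcongr; exact hlt
      _ = (k (d + 2) + 1).choose (d + 2) := (Nat.choose_succ_succ _ _).symm

lemma macaulaySum_zero_lt_of_lt (hk : StrictMonoOn k (Icc 1 (d + 1)))
    (hlt : k (d + 1) < k' (d + 1)) : macaulaySum k 0 (d + 1) < macaulaySum k' 0 (d + 1) :=
  calc macaulaySum k 0 (d + 1)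
    _ < (k (d + 1) + 1).choose (d + 1) := macaulaySum_zero_lt_choose hk
    _ ≤ (k' (d + 1)).choose (d + 1) := Nat.choose_le_choose _ hlt
    _ ≤ macaulaySum k' 0 (d + 1) := choose_le_macaulaySum_succ k' 0 d

lemma strictMonoOn_macaulayShift (hk : StrictMonoOn k (Icc 1 d)) (p : ℕ) :
    StrictMonoOn (macaulayShift k p) (Icc 1 d) := by
  intro i hi j hj hij
  have := hk hi hj hij
  have := hi.1
  simp only [macaulayShift]
  omega

lemma macaulaySum_macaulayShift (k : ℕ → ℕ) (p q d : ℕ) :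
    macaulaySum (macaulayShift k p) q d = macaulaySum k (p + q) d := by
  refine macaulaySum_congr fun i ⟨hi, _⟩ => ?_
  rcases le_total (i - 1) (k i - p) with h | h
  · rw [macaulayShift, max_eq_left h, Nat.sub_sub]
  · rw [macaulayShift, max_eq_right h, Nat.choose_eq_zero_of_lt (by omega),
      Nat.choose_eq_zero_of_lt (by omega)]

lemma macaulaySum_one_lt_choose (hk : StrictMonoOn k (Icc 1 (d + 1))) :
    macaulaySum k 1 (d + 1) < (max (k (d + 1)) (d + 1)).choose (d + 1) := by
  have h := macaulaySum_zero_lt_choose (strictMonoOn_macaulayShift hk 1)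
  rw [macaulaySum_macaulayShift] at h
  convert h using 2
  simp only [macaulayShift]
  omega

lemma macaulaySum_one_le_choose (hk : StrictMonoOn k (Icc 1 (d + 1))) {m : ℕ}
    (hm : k (d + 1) ≤ m) : macaulaySum k 1 (d + 1) ≤ m.choose (d + 1) := by
  rcases le_or_gt (d + 1) m with h | h
  · exact (macaulaySum_one_lt_choose hk).le.trans (Nat.choose_le_choose _ (max_le hm h))
  · have := macaulaySum_one_lt_choose hk
    rw [max_eq_right (by omega), Nat.choose_self] at this
    omega

lemma macaulaySum_one_mono (hk : StrictMonoOn k (Icc 1 d)) (hk' : StrictMonoOn k' (Icc 1 d))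
    (hle : macaulaySum k 0 d ≤ macaulaySum k' 0 d) : macaulaySum k 1 d ≤ macaulaySum k' 1 d := by
  induction d with
  | zero => simp [macaulaySum]
  | succ d ih =>
    rcases lt_trichotomy (k (d + 1)) (k' (d + 1)) with hlt | heq | hgt
    · calc macaulaySum k 1 (d + 1)
        _ ≤ (k' (d + 1) - 1).choose (d + 1) := macaulaySum_one_le_choose hk (by omega)
        _ ≤ macaulaySum k' 1 (d + 1) := choose_le_macaulaySum_succ k' 1 d
    · rw [macaulaySum_succ, macaulaySum_succ, heq] at hle ⊢
      gcongr
      exact ih (strictMonoOn_Icc_pred hk) (strictMonoOn_Icc_pred hk') (by omega)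
    · exact absurd hle (macaulaySum_zero_lt_of_lt hk' hgt).not_ge

lemma lt_choose_add (c d : ℕ) : c < (c + d + 2).choose (d + 1) :=
  calc c
    _ < (c + 2).choose (c + 1) := by rw [Nat.choose_succ_self_right]; omega
    _ ≤ (c + 1 + (d + 1)).choose (c + 1) := Nat.choose_le_choose _ (by omega)
    _ = (c + d + 2).choose (d + 1) := by rw [Nat.choose_symm_add]; congr 1; omega

lemma lt_choose_findGreatest_add_one (c d : ℕ) :
    c < (Nat.findGreatest (fun k => k.choose (d + 1) ≤ c) (c + d + 1) + 1).choose (d + 1) := by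
  rcases (Nat.findGreatest_le (P := fun k => k.choose (d + 1) ≤ c) (c + d + 1)).eq_or_lt
    with h | h
  · rw [h]
    exact lt_choose_add c d
  · exact not_le.1 <|
      Nat.findGreatest_is_greatest (P := fun k => k.choose (d + 1) ≤ c) (lt_add_one _) h

lemma strictMonoOn_update_Icc_succ {m : ℕ} (hk : StrictMonoOn k (Icc 1 d))
    (hm : ∀ i ∈ Icc 1 d, k i < m) :
    StrictMonoOn (Function.update k (d + 1) m) (Icc 1 (d + 1)) := by
  rintro i ⟨hi, -⟩ j ⟨-, hj⟩ hij
  rw [Function.update_of_ne (by omega)]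
  rcases hj.eq_or_lt with rfl | hj
  · rw [Function.update_self]
    exact hm i ⟨hi, by omega⟩
  · rw [Function.update_of_ne (by omega)]
    exact hk ⟨hi, by omega⟩ ⟨by omega, by omega⟩ hij

lemma macaulaySum_update_succ (k : ℕ → ℕ) (p d m : ℕ) :
    macaulaySum (Function.update k (d + 1) m) p (d + 1) =
      macaulaySum k p d + (m - p).choose (d + 1) := by
  rw [macaulaySum_succ, Function.update_self]
  congr 1
  refine macaulaySum_congr fun i ⟨_, hi⟩ => ?_
  rw [Function.update_of_ne (by omega)]

lemma exists_macaulaySum_eq_of_lt_choose {m c : ℕ} (hc : c < m.choose d) :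
    ∃ k, StrictMonoOn k (Icc 1 d) ∧ (∀ i ∈ Icc 1 d, k i < m) ∧
      macaulaySum k 0 d = c ∧ macaulaySum k 1 d = macaulayDown c d := by
  induction d generalizing m c with
  | zero =>
    obtain rfl : c = 0 := by simpa using hc
    exact ⟨id, strictMono_id.strictMonoOn _, by simp, rfl, rfl⟩
  | succ d ih =>
    set n := Nat.findGreatest (fun k => k.choose (d + 1) ≤ c) (c + d + 1)
    have hn_le : n.choose (d + 1) ≤ c :=
      Nat.findGreatest_spec (P := fun k => k.choose (d + 1) ≤ c) (Nat.zero_le _) (by simp)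
    have hn_lt : c < n.choose d + n.choose (d + 1) := by
      rw [← Nat.choose_succ_succ]
      exact lt_choose_findGreatest_add_one c d
    have hnm : n < m := not_le.1 fun h => (hn_le.trans_lt hc).not_ge (Nat.choose_le_choose _ h)
    obtain ⟨k, hk, hkn, hsum, hdown⟩ := ih (m := n) (c := c - n.choose (d + 1)) (by omega)
    refine ⟨Function.update k (d + 1) n, strictMonoOn_update_Icc_succ hk hkn, ?_, ?_, ?_⟩
    · rintro i ⟨hi, hid⟩
      rw [Function.update_apply]
      split_ifs with h
      · exact hnm
      · exact (hkn i ⟨hi, by omega⟩).trans hnm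
    · rw [macaulaySum_update_succ, hsum, Nat.sub_zero, Nat.sub_add_cancel hn_le]
    · rw [macaulaySum_update_succ, hdown, add_comm, macaulayDown]

lemma exists_macaulaySum_eq (d c : ℕ) : ∃ k, StrictMonoOn k (Icc 1 (d + 1)) ∧
    macaulaySum k 0 (d + 1) = c ∧ macaulaySum k 1 (d + 1) = macaulayDown c (d + 1) :=
  have ⟨k, hk, _, h⟩ := exists_macaulaySum_eq_of_lt_choose (lt_choose_add c d)
  ⟨k, hk, h⟩

lemma macaulayDown_mono (d : ℕ) : Monotone (macaulayDown · d) := by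
  intro a b hab
  cases d with
  | zero => simp [macaulayDown]
  | succ d =>
    obtain ⟨k, hk, rfl, hka⟩ := exists_macaulaySum_eq d a
    obtain ⟨k', hk', rfl, hkb⟩ := exists_macaulaySum_eq d b
    simpa only [hka, hkb] using macaulaySum_one_mono hk hk' hab

lemma macaulayDown_macaulaySum_zero (hk : StrictMonoOn k (Icc 1 d)) :
    macaulayDown (macaulaySum k 0 d) d = macaulaySum k 1 d := by
  cases d with
  | zero => rfl
  | succ d =>
    obtain ⟨k', hk', hsum, hdown⟩ := exists_macaulaySum_eq d (macaulaySum k 0 (d + 1))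
    rw [← hdown]
    exact le_antisymm (macaulaySum_one_mono hk' hk hsum.le) (macaulaySum_one_mono hk hk' hsum.ge)

lemma macaulayDown_macaulaySum (hk : StrictMonoOn k (Icc 1 d)) (p : ℕ) :
    macaulayDown (macaulaySum k p d) d = macaulaySum k (p + 1) d := by
  simpa only [macaulaySum_macaulayShift, add_zero] using
    macaulayDown_macaulaySum_zero (strictMonoOn_macaulayShift hk p)

lemma macaulayDown_one (c : ℕ) : macaulayDown c 1 = c - 1 := by
  simpa [macaulaySum] using macaulayDown_macaulaySum_zero (k := fun _ => c) (d := 1) (by simp)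

lemma strictMonoOn_macaulayRaise (hk : StrictMonoOn k (Icc 1 d)) :
    StrictMonoOn (macaulayRaise k) (Icc 1 d) := by
  refine strictMonoOn_of_lt_add_one ordConnected_Icc fun i _ hi hi' => ?_
  have := hk hi hi' (lt_add_one i)
  have := hi.1
  simp only [macaulayRaise]
  split_ifs <;> omega

lemma macaulaySum_macaulayRaise_one (k : ℕ → ℕ) (d : ℕ) :
    macaulaySum (macaulayRaise k) 1 d = macaulaySum k 0 d := by
  refine macaulaySum_congr fun i ⟨hi, _⟩ => ?_
  rw [macaulayRaise]
  split_ifs with h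
  · rfl
  · rw [Nat.choose_eq_zero_of_lt (by omega), Nat.choose_eq_zero_of_lt (by omega)]

lemma macaulayDown_macaulaySum_macaulayRaise (hk : StrictMonoOn k (Icc 1 d)) :
    macaulayDown (macaulaySum (macaulayRaise k) 0 d) d = macaulaySum k 0 d := by
  rw [macaulayDown_macaulaySum_zero (strictMonoOn_macaulayRaise hk), macaulaySum_macaulayRaise_one]

lemma macaulaySum_one_lt_macaulaySum_macaulayRaise_one (hk : StrictMonoOn k (Icc 1 d))
    (hk' : StrictMonoOn k' (Icc 1 d))
    (hlt : macaulaySum k' 0 d < macaulaySum (macaulayRaise k) 0 d) :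
    macaulaySum k' 1 d < macaulaySum (macaulayRaise k) 1 d := by
  induction d with
  | zero => exact hlt
  | succ d ih =>
    have hraise := strictMonoOn_macaulayRaise hk
    rcases lt_trichotomy (k' (d + 1)) (macaulayRaise k (d + 1)) with htop | heq | hgt
    · by_cases hkd : d + 1 ≤ k (d + 1)
      · rw [macaulayRaise, if_pos hkd] at htop
        calc macaulaySum k' 1 (d + 1)
          _ < (max (k' (d + 1)) (d + 1)).choose (d + 1) := macaulaySum_one_lt_choose hk'
          _ ≤ (k (d + 1)).choose (d + 1) := Nat.choose_le_choose _ (by omega)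
          _ ≤ macaulaySum k 0 (d + 1) := choose_le_macaulaySum_succ k 0 d
          _ = macaulaySum (macaulayRaise k) 1 (d + 1) := (macaulaySum_macaulayRaise_one _ _).symm
      · have hraise_top : macaulayRaise k (d + 1) = d := if_neg hkd
        have hzero := macaulaySum_zero_lt_choose hraise
        rw [hraise_top, Nat.choose_self] at hzero
        omega
    · rw [macaulaySum_succ, macaulaySum_succ, heq] at hlt ⊢
      gcongr
      exact ih (strictMonoOn_Icc_pred hk) (strictMonoOn_Icc_pred hk') (by omega)
    · exact absurd hlt (macaulaySum_zero_lt_of_lt hraise hgt).not_gt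

lemma macaulaySum_macaulayRaise_le_iff (hk : StrictMonoOn k (Icc 1 d)) {c : ℕ} :
    macaulaySum (macaulayRaise k) 0 d ≤ c ↔ macaulaySum k 0 d ≤ macaulayDown c d := by
  refine ⟨fun h => ?_, fun h => ?_⟩
  · rw [← macaulayDown_macaulaySum_macaulayRaise hk]
    exact macaulayDown_mono d h
  · contrapose! h
    cases d with
    | zero => exact absurd h (Nat.not_lt_zero c)
    | succ d =>
      obtain ⟨k', hk', rfl, hdown⟩ := exists_macaulaySum_eq d c
      rw [← hdown, ← macaulaySum_macaulayRaise_one]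
      exact macaulaySum_one_lt_macaulaySum_macaulayRaise_one hk hk' h

lemma macaulaySum_macaulayRaise_lt (hk : StrictMonoOn k (Icc 1 d)) {c : ℕ}
    (h : macaulaySum k 0 d < macaulayDown c d) : macaulaySum (macaulayRaise k) 0 d < c := by
  contrapose! h
  rw [← macaulayDown_macaulaySum_macaulayRaise hk]
  exact macaulayDown_mono d h

lemma strictMonoOn_succ_sub_one (hk : StrictMonoOn k (Icc 1 (d + 1))) :
    StrictMonoOn (fun i => k (i + 1) - 1) (Icc 1 d) := by
  rintro i ⟨hi, hid⟩ j ⟨hj, hjd⟩ hij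
  have h₁ : k 1 < k (i + 1) := hk ⟨le_rfl, by omega⟩ ⟨by omega, by omega⟩ (by omega)
  have h₂ : k (i + 1) < k (j + 1) := hk ⟨by omega, by omega⟩ ⟨by omega, by omega⟩ (by omega)
  change k (i + 1) - 1 < k (j + 1) - 1
  omega

/-- Pascal's rule applied to every summand. The bottom one is `C(k_1, 0)`, which is present exactly
when `k_1 ≠ 0` and does not belong to a Macaulay sum. -/
lemma macaulaySum_macaulayRaise_succ (k : ℕ → ℕ) (d : ℕ) {p : ℕ} (hp : p ≤ 1) :
    macaulaySum (macaulayRaise k) p (d + 1) = macaulaySum k p (d + 1) +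
      macaulaySum (macaulayRaise fun i => k (i + 1) - 1) p d + min (k 1) 1 := by
  have hpascal : ∀ i ∈ Finset.Icc 1 d, (macaulayRaise k (i + 1) - p).choose (i + 1) =
      (k (i + 1) - p).choose (i + 1) +
        (macaulayRaise (fun i => k (i + 1) - 1) i - p).choose i := by
    intro i hi
    have := (Finset.mem_Icc.1 hi).1
    simp only [macaulayRaise]
    by_cases h : i + 1 ≤ k (i + 1)
    · rw [if_pos h, if_pos (by omega), Nat.sub_add_cancel (by omega), Nat.sub_add_comm (by omega),
        Nat.choose_succ_succ, add_comm]
    · rw [if_neg h, if_neg (by omega), Nat.choose_eq_zero_of_lt (by omega),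
        Nat.choose_eq_zero_of_lt (by omega), Nat.choose_eq_zero_of_lt (by omega)]
  have hbottom : macaulayRaise k 1 - p = k 1 - p + min (k 1) 1 := by
    simp only [macaulayRaise]
    split_ifs <;> omega
  rw [macaulaySum_succ', macaulaySum_succ', Finset.sum_congr rfl hpascal,
    Finset.sum_add_distrib, hbottom, macaulaySum]
  omega

theorem le_macaulayDown_add_of_le (d : ℕ) {a b : ℕ}
    (h : a ≤ macaulayDown a (d + 1) + macaulayDown b d) : a ≤ macaulayDown (a + b) (d + 1) := by
  obtain ⟨k, hk, rfl, hdown⟩ := exists_macaulaySum_eq d a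
  have htail := strictMonoOn_succ_sub_one hk
  have hraise₀ := macaulaySum_macaulayRaise_succ k d zero_le_one
  have hraise₁ := macaulaySum_macaulayRaise_succ k d le_rfl
  rw [macaulaySum_macaulayRaise_one, macaulaySum_macaulayRaise_one] at hraise₁
  rw [← macaulaySum_macaulayRaise_le_iff hk, hraise₀, add_assoc]
  gcongr
  rcases Nat.eq_zero_or_pos (k 1) with hk1 | hk1
  · rw [hk1, Nat.zero_min, add_zero, macaulaySum_macaulayRaise_le_iff htail]
    omega
  · rw [min_eq_right (by omega : 1 ≤ k 1)] at *
    exact macaulaySum_macaulayRaise_lt htail (by omega)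

end MacaulayNumerics

section WordIdeal

variable {R : Type*} [CommRing R] (l : ℕ → R)

lemma wordIdealAux_append (o o' : List Bool) (j : ℕ) (I : Ideal R) :
    wordIdealAux l j I (o ++ o') =
      wordIdealAux l (j + o.length) (wordIdealAux l j I o) o' := by
  induction o generalizing j I with
  | nil => rfl
  | cons a o ih =>
    simp only [List.cons_append, wordIdealAux, ih, List.length_cons, add_assoc, add_comm 1]

lemma wordIdeal_append_true (o : List Bool) :
    wordIdeal l (o ++ [true]) = (wordIdeal l o).colon (Ideal.span {l o.length}) := by
  simp [wordIdeal, wordIdealAux_append, wordIdealAux]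

lemma wordIdeal_append_false (o : List Bool) :
    wordIdeal l (o ++ [false]) = wordIdeal l o ⊔ Ideal.span {l o.length} := by
  simp [wordIdeal, wordIdealAux_append, wordIdealAux]

lemma wordIdeal_replicate_false (p : ℕ) :
    wordIdeal l (List.replicate p false) = Ideal.span (l '' Set.Iio p) := by
  induction p with
  | zero => simp [wordIdeal, wordIdealAux]
  | succ p ih =>
    rw [List.replicate_succ', wordIdeal_append_false, ih, List.length_replicate,
      ← Ideal.span_union, ← Set.image_singleton, ← Set.image_union, Set.union_singleton,
      ← Order.succ_eq_add_one, Order.Iio_succ_eq_insert]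

end WordIdeal

section GradedAlgebra

variable {K R : Type*} [Field K] [CommRing R] [Algebra K R] (𝒜 : ℕ → Submodule K R)

lemma mem_homComp {I : Ideal R} {e : ℕ} {x : 𝒜 e} : x ∈ homComp 𝒜 I e ↔ (x : R) ∈ I := Iff.rfl

lemma quotDim_add_homDim (I : Ideal R) (e : ℕ) [FiniteDimensional K (𝒜 e)] :
    quotDim 𝒜 I e + homDim 𝒜 I e = Module.finrank K (𝒜 e) :=
  Submodule.finrank_quotient_add_finrank _

variable [GradedAlgebra 𝒜] {I : Ideal R} {x : R} {i : ℕ}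

lemma isHomogeneous_colon_span_singleton (hI : I.IsHomogeneous 𝒜) (hx : x ∈ 𝒜 i) :
    (I.colon (Ideal.span {x})).IsHomogeneous 𝒜 := by
  intro e y hy
  rw [Ideal.mem_colon_span_singleton] at hy ⊢
  rw [← DirectSum.coe_decompose_mul_add_of_right_mem 𝒜 hx]
  exact hI (e + i) hy

lemma isHomogeneous_sup_span_singleton (hI : I.IsHomogeneous 𝒜) (hx : x ∈ 𝒜 i) :
    (I ⊔ Ideal.span {x}).IsHomogeneous 𝒜 :=
  hI.sup (Ideal.homogeneous_span 𝒜 _ (by rintro _ rfl; exact ⟨i, hx⟩))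

lemma isHomogeneous_wordIdeal {l : ℕ → R} (o : List Bool)
    (hl : ∀ j < o.length, l j ∈ 𝒜 1) : (wordIdeal l o).IsHomogeneous 𝒜 := by
  induction o using List.reverseRecOn with
  | nil => exact Ideal.IsHomogeneous.bot 𝒜
  | append_singleton o a ih =>
    rw [List.length_append, List.length_singleton] at hl
    have ho := ih fun j hj => hl j (by omega)
    have hlo := hl o.length (by omega)
    cases a
    · rw [wordIdeal_append_false]
      exact isHomogeneous_sup_span_singleton 𝒜 ho hlo
    · rw [wordIdeal_append_true]
      exact isHomogeneous_colon_span_singleton 𝒜 ho hlo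

/-- Multiplication by a form `x` of degree `i`, as a `K`-linear map `R_e → R_{e + i}`. -/
def mulForm (hx : x ∈ 𝒜 i) (e : ℕ) : 𝒜 e →ₗ[K] 𝒜 (e + i) :=
  (LinearMap.mulRight K x).restrict fun _ hy => SetLike.mul_mem_graded hy hx

lemma coe_mulForm (hx : x ∈ 𝒜 i) (e : ℕ) (y : 𝒜 e) : (mulForm 𝒜 hx e y : R) = y * x := rfl

lemma homComp_colon_span_singleton (hx : x ∈ 𝒜 i) (e : ℕ) :
    homComp 𝒜 (I.colon (Ideal.span {x})) e =
      (homComp 𝒜 I (e + i)).comap (mulForm 𝒜 hx e) := by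
  ext y
  rw [Submodule.mem_comap, mem_homComp, mem_homComp, Ideal.mem_colon_span_singleton, coe_mulForm]

lemma homComp_sup_span_singleton (hI : I.IsHomogeneous 𝒜) (hx : x ∈ 𝒜 i) (e : ℕ) :
    homComp 𝒜 (I ⊔ Ideal.span {x}) (e + i) =
      homComp 𝒜 I (e + i) ⊔ LinearMap.range (mulForm 𝒜 hx e) := by
  refine le_antisymm (fun z hz => ?_) (sup_le (fun z hz => Ideal.mem_sup_left hz) ?_)
  · rw [mem_homComp, sup_comm, Ideal.mem_span_singleton_sup] at hz
    obtain ⟨a, b, hb, hz⟩ := hz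
    have hdecomp : (DirectSum.decompose 𝒜 b (e + i)) +
        mulForm 𝒜 hx e (DirectSum.decompose 𝒜 a e) = z := by
      ext
      rw [Submodule.coe_add, coe_mulForm, ← DirectSum.coe_decompose_mul_add_of_right_mem 𝒜 hx,
        ← Submodule.coe_add, ← DirectSum.add_apply, ← DirectSum.decompose_add, add_comm b, hz,
        DirectSum.decompose_of_mem_same 𝒜 z.2]
    rw [← hdecomp]
    exact Submodule.add_mem_sup (hI (e + i) hb) (LinearMap.mem_range_self _ _)
  · rintro _ ⟨y, rfl⟩
    exact Ideal.mem_sup_right (Ideal.mem_span_singleton'.2 ⟨y, rfl⟩)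

/-- Dimension count in the exact sequence
`0 → (R/(I : x))_e → (R/I)_{e+i} → (R/(I + (x)))_{e+i} → 0`. -/
lemma quotDim_colon_add_quotDim_sup (hI : I.IsHomogeneous 𝒜) (hx : x ∈ 𝒜 i) (e : ℕ)
    [FiniteDimensional K (𝒜 (e + i))] :
    quotDim 𝒜 (I.colon (Ideal.span {x})) e + quotDim 𝒜 (I ⊔ Ideal.span {x}) (e + i) =
      quotDim 𝒜 I (e + i) := by
  let N := homComp 𝒜 I (e + i)
  let f := N.mkQ ∘ₗ mulForm 𝒜 hx e
  have hker : homComp 𝒜 (I.colon (Ideal.span {x})) e = LinearMap.ker f := by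
    rw [LinearMap.ker_comp, Submodule.ker_mkQ, homComp_colon_span_singleton 𝒜 hx]
  have hcolon : quotDim 𝒜 (I.colon (Ideal.span {x})) e = Module.finrank K (LinearMap.range f) := by
    rw [quotDim, hker]
    exact f.quotKerEquivRange.finrank_eq
  have hsup : quotDim 𝒜 (I ⊔ Ideal.span {x}) (e + i) =
      Module.finrank K ((𝒜 (e + i) ⧸ N) ⧸ LinearMap.range f) := by
    rw [quotDim, homComp_sup_span_singleton 𝒜 hI hx, LinearMap.range_comp]
    exact (Submodule.quotientQuotientEquivQuotientSup _ _).finrank_eq.symm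
  rw [hcolon, hsup, add_comm]
  exact Submodule.finrank_quotient_add_finrank _

lemma quotDim_wordIdeal_append {l : ℕ → R} (o : List Bool) (hl : ∀ j ≤ o.length, l j ∈ 𝒜 1) (e : ℕ)
    [FiniteDimensional K (𝒜 (e + 1))] :
    quotDim 𝒜 (wordIdeal l (o ++ [true])) e + quotDim 𝒜 (wordIdeal l (o ++ [false])) (e + 1) =
      quotDim 𝒜 (wordIdeal l o) (e + 1) := by
  rw [wordIdeal_append_true, wordIdeal_append_false]
  exact quotDim_colon_add_quotDim_sup 𝒜
    (isHomogeneous_wordIdeal 𝒜 o fun j hj => hl j hj.le) (hl _ le_rfl) e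

lemma quotDim_eq_zero_of_irrelevant_le (hI : (HomogeneousIdeal.irrelevant 𝒜).toIdeal ≤ I)
    {e : ℕ} (he : 0 < e) : quotDim 𝒜 I e = 0 := by
  have htop : homComp 𝒜 I e = ⊤ :=
    eq_top_iff.2 fun y _ => hI (HomogeneousIdeal.mem_irrelevant_of_mem 𝒜 he y.2)
  have := Submodule.Quotient.subsingleton_iff.2 htop
  exact Module.finrank_zero_of_subsingleton

lemma quotDim_zero_pos [FiniteDimensional K (𝒜 0)] (hI : I ≠ ⊤) : 0 < quotDim 𝒜 I 0 := by
  rw [quotDim, Module.finrank_pos_iff, Submodule.Quotient.nontrivial_iff]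
  intro htop
  have hone : (1 : 𝒜 0) ∈ homComp 𝒜 I 0 := htop ▸ Submodule.mem_top
  exact hI ((Ideal.eq_top_iff_one I).2 hone)

lemma le_span_mul_of_irrelevant_le_span {S : Set R} (hS : S ⊆ 𝒜 1)
    (hm : (HomogeneousIdeal.irrelevant 𝒜).toIdeal ≤ Ideal.span S) (n : ℕ) :
    𝒜 (n + 1) ≤ 𝒜 n * Submodule.span K S := by
  have hcomp : ∀ y ∈ Ideal.span S,
      (DirectSum.decompose 𝒜 y (n + 1) : R) ∈ 𝒜 n * Submodule.span K S := by
    intro y hy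
    induction hy using Submodule.closure_induction with
    | zero => simp
    | add y z _ _ hy hz => simpa using add_mem hy hz
    | smul_mem a s hs =>
      rw [smul_eq_mul, DirectSum.coe_decompose_mul_add_of_right_mem 𝒜 (hS hs)]
      exact Submodule.mul_mem_mul (SetLike.coe_mem _) (Submodule.subset_span hs)
  intro y hy
  rw [← DirectSum.decompose_of_mem_same 𝒜 hy]
  exact hcomp y (hm (HomogeneousIdeal.mem_irrelevant_of_mem 𝒜 n.succ_pos hy))

lemma finiteDimensional_of_irrelevant_le_span [FiniteDimensional K (𝒜 0)] {S : Set R}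
    (hfin : S.Finite) (hS : S ⊆ 𝒜 1)
    (hm : (HomogeneousIdeal.irrelevant 𝒜).toIdeal ≤ Ideal.span S) (n : ℕ) :
    FiniteDimensional K (𝒜 n) := by
  induction n with
  | zero => infer_instance
  | succ n ih =>
    have hfg : (𝒜 n * Submodule.span K S).FG :=
      ((Submodule.fg_iff_finiteDimensional _).2 ih).mul (Submodule.fg_span hfin)
    have := (Submodule.fg_iff_finiteDimensional _).1 hfg
    exact Submodule.finiteDimensional_of_le (le_span_mul_of_irrelevant_le_span 𝒜 hS hm n)

end GradedAlgebra

namespace GrProp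

variable {K R : Type*} [Field K] [CommRing R] [Algebra K R] {𝒜 : ℕ → Submodule K R}
  [GradedAlgebra 𝒜] {l : ℕ → R} {r d : ℕ}

lemma finiteDimensional [FiniteDimensional K (𝒜 0)] (hGr : GrProp 𝒜 l r d) (hd : 0 < d)
    (hl : ∀ j < r, l j ∈ 𝒜 1) (n : ℕ) : FiniteDimensional K (𝒜 n) := by
  have hm := (hGr (List.replicate r false) (by simp)).2.1 (by simp)
    (by simpa [List.count_replicate] using hd)
  rw [wordIdeal_replicate_false] at hm
  refine finiteDimensional_of_irrelevant_le_span 𝒜 ((Set.finite_Iio r).image l) ?_ hm n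
  rintro _ ⟨j, hj, rfl⟩
  exact hl j hj

lemma quotDim_false_true_le (hGr : GrProp 𝒜 l r d) {o : List Bool} (ho : o.length + 2 ≤ r) {e : ℕ}
    (he : o.count true + (e + 1) = d) [FiniteDimensional K (𝒜 e)] :
    quotDim 𝒜 (wordIdeal l (o ++ [false, true])) e ≤
      quotDim 𝒜 (wordIdeal l (o ++ [true, false])) e := by
  have hdim := (hGr o (by omega)).2.2 ho
  rw [show d - o.count true - 1 = e by omega] at hdim
  have hct := quotDim_add_homDim 𝒜 (wordIdeal l (o ++ [true, false])) e
  have hst := quotDim_add_homDim 𝒜 (wordIdeal l (o ++ [false, true])) e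
  omega

lemma quotDim_append_false_eq_zero (hGr : GrProp 𝒜 l r d) {o : List Bool} (ho : o.length + 1 = r)
    {e : ℕ} (he : o.count true + (e + 1) = d) :
    quotDim 𝒜 (wordIdeal l (o ++ [false])) (e + 1) = 0 :=
  quotDim_eq_zero_of_irrelevant_le 𝒜
    ((hGr (o ++ [false]) (by simp [ho])).2.1 (by simp [ho]) (by grind)) e.succ_pos

variable [∀ n, FiniteDimensional K (𝒜 n)]

lemma quotDim_one_append_false_le (hGr : GrProp 𝒜 l r d) (hl : ∀ j < r, l j ∈ 𝒜 1)
    {o : List Bool} (ho : o.length < r) :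
    quotDim 𝒜 (wordIdeal l (o ++ [false])) 1 ≤ quotDim 𝒜 (wordIdeal l o) 1 - 1 := by
  have hsplit := quotDim_wordIdeal_append 𝒜 o (fun j hj => hl j (by omega)) 0
  rw [zero_add] at hsplit
  by_cases hm : (HomogeneousIdeal.irrelevant 𝒜).toIdeal ≤ wordIdeal l o
  · have := quotDim_eq_zero_of_irrelevant_le 𝒜 hm one_pos
    omega
  · have hne : wordIdeal l (o ++ [true]) ≠ ⊤ := by
      rw [wordIdeal_append_true, Ideal.ne_top_iff_one, Ideal.mem_colon_span_singleton, one_mul]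
      exact (hGr o ho.le).1 hm ho
    have := quotDim_zero_pos 𝒜 hne
    omega

lemma quotDim_append_false_le_of_append (hGr : GrProp 𝒜 l r d) (hl : ∀ j < r, l j ∈ 𝒜 1)
    {o : List Bool} (ho : o.length + 2 ≤ r) {e : ℕ} (he : o.count true + (e + 2) = d)
    (hsum : quotDim 𝒜 (wordIdeal l (o ++ [false, false])) (e + 2) ≤
      macaulayDown (quotDim 𝒜 (wordIdeal l (o ++ [false])) (e + 2)) (e + 2))
    (hcolon : quotDim 𝒜 (wordIdeal l (o ++ [true, false])) (e + 1) ≤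
      macaulayDown (quotDim 𝒜 (wordIdeal l (o ++ [true])) (e + 1)) (e + 1)) :
    quotDim 𝒜 (wordIdeal l (o ++ [false])) (e + 2) ≤
      macaulayDown (quotDim 𝒜 (wordIdeal l o) (e + 2)) (e + 2) := by
  have hsplit := quotDim_wordIdeal_append 𝒜 o (fun j hj => hl j (by omega)) (e + 1)
  have hsplit_sum := quotDim_wordIdeal_append 𝒜 (o ++ [false])
    (fun j hj => hl j (by grind)) (e + 1)
  simp only [List.append_assoc, List.cons_append, List.nil_append] at hsplit_sum
  rw [← hsplit, add_comm (quotDim 𝒜 _ (e + 1))]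
  refine le_macaulayDown_add_of_le (e + 1) ?_
  calc quotDim 𝒜 (wordIdeal l (o ++ [false])) (e + 2)
    _ = quotDim 𝒜 (wordIdeal l (o ++ [false, true])) (e + 1) +
        quotDim 𝒜 (wordIdeal l (o ++ [false, false])) (e + 2) := hsplit_sum.symm
    _ ≤ quotDim 𝒜 (wordIdeal l (o ++ [true, false])) (e + 1) +
        quotDim 𝒜 (wordIdeal l (o ++ [false, false])) (e + 2) := by
      gcongr
      exact hGr.quotDim_false_true_le ho he
    _ ≤ _ := by
      rw [add_comm]
      exact add_le_add hsum hcolon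

/-- Green's hyperplane restriction theorem for the ideals `I_o`. -/
theorem quotDim_append_false_le (hGr : GrProp 𝒜 l r d) (hl : ∀ j < r, l j ∈ 𝒜 1)
    {o : List Bool} (ho : o.length < r) {e : ℕ} (he : o.count true + (e + 1) = d) :
    quotDim 𝒜 (wordIdeal l (o ++ [false])) (e + 1) ≤
      macaulayDown (quotDim 𝒜 (wordIdeal l o) (e + 1)) (e + 1) := by
  induction hn : r - o.length generalizing o e with
  | zero => omega
  | succ n ih =>
    rcases eq_or_lt_of_le (Nat.succ_le_of_lt ho) with hlast | hlt
    · exact (hGr.quotDim_append_false_eq_zero hlast he).trans_le (Nat.zero_le _)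
    cases e with
    | zero =>
      rw [zero_add, macaulayDown_one]
      exact hGr.quotDim_one_append_false_le hl ho
    | succ e =>
      have hsum := ih (o := o ++ [false]) (e := e + 1) (by simpa using hlt) (by simpa using he)
        (by grind)
      have hcolon := ih (o := o ++ [true]) (e := e) (by simpa using hlt) (by grind)
        (by grind)
      rw [List.append_assoc] at hsum hcolon
      exact hGr.quotDim_append_false_le_of_append hl hlt he hsum hcolon

end GrProp

theorem corollary_hyperplane_restriction_general
    {K R : Type*} [Field K] [CommRing R] [Algebra K R]
    (𝒜 : ℕ → Submodule K R) [GradedAlgebra 𝒜] [FiniteDimensional K (𝒜 0)]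
    (d r : ℕ) (hd : 0 < d) (l : ℕ → R) (hl : ∀ j < r, l j ∈ 𝒜 1) (hGr : GrProp 𝒜 l r d)
    (k : ℕ → ℕ) (hk : StrictMonoOn k (Set.Icc 1 d))
    (hrep : Module.finrank K (𝒜 d) = ∑ i ∈ Finset.Icc 1 d, (k i).choose i) (p : ℕ) (hp : p ≤ r) :
    quotDim 𝒜 (Ideal.span (l '' Set.Iio p)) d ≤ ∑ i ∈ Finset.Icc 1 d, (k i - p).choose i := by
  have := hGr.finiteDimensional hd hl
  change _ ≤ macaulaySum k p d
  rw [← wordIdeal_replicate_false]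
  induction p with
  | zero => exact (Submodule.finrank_quotient_le _).trans hrep.le
  | succ p ih =>
    obtain ⟨e, rfl⟩ := Nat.exists_eq_add_one.2 hd
    have hgreen := hGr.quotDim_append_false_le hl (o := List.replicate p false) (e := e)
      (by simpa using hp) (by simp [List.count_replicate])
    rw [← List.replicate_succ'] at hgreen
    rw [← macaulayDown_macaulaySum hk]
    exact hgreen.trans (macaulayDown_mono _ (ih (by omega)))

/-- **Corollary of the hyperplane restriction theorem.**  If the linear forms
`l 0, …, l (r-1)` of a standard graded algebra `R` satisfy property (Gr,d), and
`dim_K R_d = C(k_d,d) + C(k_{d-1},d-1) + … + C(k_1,1)` is the `d`-th Macaulay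
representation of `dim_K R_d`, then for every `1 ≤ p ≤ r`,
`dim_K (R/(l_1,…,l_p))_d ≤ C(k_d - p,d) + … + C(k_1 - p,1)`. -/
theorem corollary_hyperplane_restriction
    {K R : Type*} [Field K] [CommRing R] [Algebra K R]
    (𝒜 : ℕ → Submodule K R) [GradedAlgebra 𝒜]
    (h0 : 𝒜 0 = (1 : Submodule K R)) (hstd : ∀ n, 𝒜 (n + 1) = 𝒜 1 * 𝒜 n)
    [FiniteDimensional K (𝒜 1)] (d r : ℕ) (hd : 0 < d)
    (l : ℕ → R) (hl : ∀ j < r, l j ∈ 𝒜 1)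
    (hGr : GrProp 𝒜 l r d)
    (k : ℕ → ℕ) (hk : ∀ i j, 1 ≤ i → i < j → j ≤ d → k i < k j)
    (hrep : Module.finrank K (𝒜 d) = ∑ i ∈ Finset.Icc 1 d, (k i).choose i) :
    ∀ p : ℕ, 1 ≤ p → p ≤ r →
      quotDim 𝒜 (Ideal.span (l '' Set.Iio p)) d ≤
        ∑ i ∈ Finset.Icc 1 d, (k i - p).choose i := by
  have : FiniteDimensional K (𝒜 0) := by
    rw [h0, Submodule.one_eq_span]
    infer_instance
  exact fun p _ hp => corollary_hyperplane_restriction_general 𝒜 d r hd l hl hGr k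
    (fun i hi j hj hij => hk i j hi.1 hij hj.2) hrep p hp
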